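/- Let D be an open subset of the half-plane {(z,ρ) ∈ ℝ² : ρ > 0}, let G : D → GL(2,ℂ) be twice continuously differentiable, and let Λ ⊂ ℂ be a nonempty open connected set. Suppose s : Λ × D → ℂ is continuous, holomorphic in λ ∈ Λ, C¹ in (z,ρ), and satisfies s(λ,z,ρ)² = (λ − ξ)(λ − ξ̄) with ξ = z + iρ, and define γ(λ,z,ρ) = (2/(ξ − ξ̄))(λ − (ξ + ξ̄)/2 + s(λ,z,ρ)); assume γ ≠ 1 and γ ≠ −1 on Λ × D and that λ ↦ γ(λ,z,ρ) is nonconstant for each (z,ρ). If for every λ ∈ Λ there exists a C¹ invertible matrix function Ψ_λ : D → GL(2,ℂ) satisfying the linear system ∂_ξΨ_λ = (G_ξ G⁻¹/(1 − γ))Ψ_λ and ∂_ξ̄Ψ_λ = (G_ξ̄ G⁻¹/(1 + γ))Ψ_λ on D, then G satisfies ∂_ρ(ρ G_ρ G⁻¹) + ∂_z(ρ G_z G⁻¹) = 0 on D. -/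

import Mathlib

open Complex Matrix

noncomputable section

/-- Entrywise partial derivative of a matrix-valued function with respect to `z`. -/
def matPz (F : ℝ × ℝ → Matrix (Fin 2) (Fin 2) ℂ) (p : ℝ × ℝ) :
    Matrix (Fin 2) (Fin 2) ℂ :=
  Matrix.of fun i j => deriv (fun t : ℝ => F (t, p.2) i j) p.1

/-- Entrywise partial derivative of a matrix-valued function with respect to `ρ`. -/
def matPr (F : ℝ × ℝ → Matrix (Fin 2) (Fin 2) ℂ) (p : ℝ × ℝ) :
    Matrix (Fin 2) (Fin 2) ℂ :=
  Matrix.of fun i j => deriv (fun t : ℝ => F (p.1, t) i j) p.2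

/-- `∂_ξ = ½(∂_z − i ∂_ρ)`, entrywise on matrix-valued functions. -/
def matDxi (F : ℝ × ℝ → Matrix (Fin 2) (Fin 2) ℂ) (p : ℝ × ℝ) :
    Matrix (Fin 2) (Fin 2) ℂ :=
  (2 : ℂ)⁻¹ • (matPz F p - Complex.I • matPr F p)

/-- `∂_ξ̄ = ½(∂_z + i ∂_ρ)`, entrywise on matrix-valued functions. -/
def matDxiBar (F : ℝ × ℝ → Matrix (Fin 2) (Fin 2) ℂ) (p : ℝ × ℝ) :
    Matrix (Fin 2) (Fin 2) ℂ :=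
  (2 : ℂ)⁻¹ • (matPz F p + Complex.I • matPr F p)

/-- `ξ = z + iρ`. -/
def xi (p : ℝ × ℝ) : ℂ := (p.1 : ℂ) + Complex.I * (p.2 : ℂ)

/-!
Write `U = G_ξ G⁻¹` and `V = G_ξ̄ G⁻¹`. Both `G` and `Ψ` solve linear systems, with coefficients
`(U, V)` and `(a U, b V)` for `a = 1/(1 - γ)`, `b = 1/(1 + γ)`, so equality of mixed second
derivatives yields a zero-curvature identity for each pair. Eliminating the commutator `[U, V]`
between them leaves a linear relation among `U`, `V`, `U_ξ̄` and `V_ξ`. The function `γ` lies on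
the curve `ρ (1 + γ²) = 2 i (z - λ) γ`; differentiating this equation evaluates `a_ξ̄` and `b_ξ`,
and the relation becomes `γ / (1 - γ²) ((ρ U)_ξ̄ + (ρ V)_ξ) = 0`. The same curve shows `γ ≠ 0`,
since `ρ ≠ 0`.
-/

open Filter

open scoped Topology

section ComplexDeriv

variable {E : Type*} [NormedAddCommGroup E] [NormedSpace ℝ E]
variable {F : Type*} [NormedAddCommGroup F] [NormedSpace ℂ F]
variable {A : Type*} [NormedRing A] [NormedAlgebra ℂ A]

/-- The derivative of `f` along the vector `v.1 + i v.2` of the complexified tangent space, for a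
real-differentiable function `f` with values in a complex normed space. -/
def complexDeriv (v : E × E) (f : E → F) (p : E) : F :=
  fderiv ℝ f p v.1 + I • fderiv ℝ f p v.2

/-- The right logarithmic derivative `(∂_v G) G⁻¹`; it is `0` where `G` is not invertible. -/
def rightLogDeriv (v : E × E) (G : E → A) (p : E) : A :=
  complexDeriv v G p * Ring.inverse (G p)

variable {p : E}

theorem complexDeriv_congr (v : E × E) {f g : E → F} (h : f =ᶠ[𝓝 p] g) :
    complexDeriv v f p = complexDeriv v g p := by
  rw [complexDeriv, complexDeriv, h.fderiv_eq]

theorem complexDeriv_mul (v : E × E) {f g : E → A}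
    (hf : DifferentiableAt ℝ f p) (hg : DifferentiableAt ℝ g p) :
    complexDeriv v (fun q ↦ f q * g q) p
      = complexDeriv v f p * g p + f p * complexDeriv v g p := by
  simp only [complexDeriv, fderiv_fun_mul' hf hg, _root_.add_apply, _root_.smul_apply,
    smul_eq_mul, MulOpposite.smul_eq_mul_unop, MulOpposite.unop_op, smul_add, add_mul, mul_add,
    smul_mul_assoc, mul_smul_comm]
  abel

theorem complexDeriv_smul (v : E × E) {c : E → ℂ} {f : E → F}
    (hc : DifferentiableAt ℝ c p) (hf : DifferentiableAt ℝ f p) :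
    complexDeriv v (fun q ↦ c q • f q) p
      = complexDeriv v c p • f p + c p • complexDeriv v f p := by
  simp only [complexDeriv, fderiv_fun_smul hc hf, _root_.add_apply, _root_.smul_apply,
    ContinuousLinearMap.smulRight_apply, smul_eq_mul]
  module

theorem complexDeriv_comp_of_hasDerivAt (v : E × E) {f : ℂ → F} {f' : F} {g : E → ℂ}
    (hf : HasDerivAt f f' (g p)) (hg : DifferentiableAt ℝ g p) :
    complexDeriv v (fun q ↦ f (g q)) p = complexDeriv v g p • f' := by
  have hfg : HasFDerivAt (fun q ↦ f (g q)) _ p :=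
    (hf.hasFDerivAt.restrictScalars ℝ).comp p hg.hasFDerivAt
  simp [complexDeriv, hfg.fderiv, add_smul, smul_smul]

theorem complexDeriv_inv_one_sub (v : E × E) {γ : E → ℂ}
    (hγ : DifferentiableAt ℝ γ p) (hne : 1 - γ p ≠ 0) :
    complexDeriv v (fun q ↦ (1 - γ q)⁻¹) p = complexDeriv v γ p / (1 - γ p) ^ 2 := by
  have h : HasDerivAt (fun x : ℂ ↦ (1 - x)⁻¹) (1 / (1 - γ p) ^ 2) (γ p) := by
    simpa using ((hasDerivAt_id (γ p)).const_sub 1).fun_inv hne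
  rw [complexDeriv_comp_of_hasDerivAt v h hγ, smul_eq_mul, mul_one_div]

theorem complexDeriv_inv_one_add (v : E × E) {γ : E → ℂ}
    (hγ : DifferentiableAt ℝ γ p) (hne : 1 + γ p ≠ 0) :
    complexDeriv v (fun q ↦ (1 + γ q)⁻¹) p = -complexDeriv v γ p / (1 + γ p) ^ 2 := by
  have h : HasDerivAt (fun x : ℂ ↦ (1 + x)⁻¹) (-1 / (1 + γ p) ^ 2) (γ p) := by
    simpa using ((hasDerivAt_id (γ p)).const_add 1).fun_inv hne
  rw [complexDeriv_comp_of_hasDerivAt v h hγ, smul_eq_mul, mul_div_assoc', mul_neg_one]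

theorem differentiableAt_complexDeriv (v : E × E) {f : E → F}
    (hf : DifferentiableAt ℝ (fderiv ℝ f) p) : DifferentiableAt ℝ (complexDeriv v f) p := by
  unfold complexDeriv
  fun_prop

theorem differentiableAt_fderiv_of_contDiffAt_two {f : E → F} (hf : ContDiffAt ℝ 2 f p) :
    DifferentiableAt ℝ (fderiv ℝ f) p :=
  (hf.fderiv_right one_add_one_eq_two.le).differentiableAt one_ne_zero

theorem complexDeriv_comm (v w : E × E) {f : E → F}
    (hf : ∀ᶠ q in 𝓝 p, DifferentiableAt ℝ f q) (hf' : DifferentiableAt ℝ (fderiv ℝ f) p) :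
    complexDeriv v (complexDeriv w f) p = complexDeriv w (complexDeriv v f) p := by
  have hsymm : ∀ x y, fderiv ℝ (fderiv ℝ f) p x y = fderiv ℝ (fderiv ℝ f) p y x :=
    second_derivative_symmetric_of_eventually
      (hf.mono fun _ h ↦ h.hasFDerivAt) hf'.hasFDerivAt
  have hfderiv : ∀ u : E × E, ∀ x, fderiv ℝ (complexDeriv u f) p x
      = fderiv ℝ (fderiv ℝ f) p x u.1 + I • fderiv ℝ (fderiv ℝ f) p x u.2 := fun u x ↦ by
    have h : HasFDerivAt (complexDeriv u f) _ p :=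
      (hf'.hasFDerivAt.clm_apply (hasFDerivAt_const u.1 p)).add
        ((hf'.hasFDerivAt.clm_apply (hasFDerivAt_const u.2 p)).const_smul I)
    simp [h.fderiv]
  simp only [complexDeriv, hfderiv, hsymm v.1, hsymm v.2]
  module

theorem differentiableAt_rightLogDeriv [CompleteSpace A] (v : E × E) {G : E → A}
    (hG : DifferentiableAt ℝ G p) (hG' : DifferentiableAt ℝ (fderiv ℝ G) p)
    (hGp : IsUnit (G p)) : DifferentiableAt ℝ (rightLogDeriv v G) p :=
  (differentiableAt_complexDeriv v hG').fun_mul (hG.inverse hGp)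

theorem rightLogDeriv_mul_self (v : E × E) {G : E → A} (hGp : IsUnit (G p)) :
    rightLogDeriv v G p * G p = complexDeriv v G p := by
  rw [rightLogDeriv, mul_assoc, Ring.inverse_mul_cancel _ hGp, mul_one]

-- Compare the two mixed second derivatives of `Ψ` and cancel the invertible factor `Ψ p`.
theorem zero_curvature_of_linear_system (v w : E × E) {Ψ M N : E → A}
    (hΨ : ∀ᶠ q in 𝓝 p, DifferentiableAt ℝ Ψ q) (hΨ' : DifferentiableAt ℝ (fderiv ℝ Ψ) p)
    (hΨp : IsUnit (Ψ p)) (hM : DifferentiableAt ℝ M p) (hN : DifferentiableAt ℝ N p)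
    (hv : ∀ᶠ q in 𝓝 p, complexDeriv v Ψ q = M q * Ψ q)
    (hw : ∀ᶠ q in 𝓝 p, complexDeriv w Ψ q = N q * Ψ q) :
    complexDeriv w M p + M p * N p = complexDeriv v N p + N p * M p := by
  have hΨd := hΨ.self_of_nhds
  refine hΨp.mul_right_cancel ?_
  calc (complexDeriv w M p + M p * N p) * Ψ p
      = complexDeriv w (complexDeriv v Ψ) p := by
        rw [complexDeriv_congr w hv, complexDeriv_mul w hM hΨd, hw.self_of_nhds, add_mul,
          mul_assoc]
    _ = complexDeriv v (complexDeriv w Ψ) p := complexDeriv_comm w v hΨ hΨ'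
    _ = (complexDeriv v N p + N p * M p) * Ψ p := by
        rw [complexDeriv_congr v hw, complexDeriv_mul v hN hΨd, hv.self_of_nhds, add_mul,
          mul_assoc]

theorem zero_curvature_rightLogDeriv [CompleteSpace A] (v w : E × E) {G : E → A}
    (hG : ∀ᶠ q in 𝓝 p, DifferentiableAt ℝ G q) (hG' : DifferentiableAt ℝ (fderiv ℝ G) p)
    (hGp : IsUnit (G p)) :
    complexDeriv w (rightLogDeriv v G) p + rightLogDeriv v G p * rightLogDeriv w G p
      = complexDeriv v (rightLogDeriv w G) p + rightLogDeriv w G p * rightLogDeriv v G p := by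
  have hunit : ∀ᶠ q in 𝓝 p, IsUnit (G q) :=
    hG.self_of_nhds.continuousAt.eventually (Units.isOpen.mem_nhds hGp)
  exact zero_curvature_of_linear_system v w hG hG' hGp
    (differentiableAt_rightLogDeriv v hG.self_of_nhds hG' hGp)
    (differentiableAt_rightLogDeriv w hG.self_of_nhds hG' hGp)
    (hunit.mono fun _ h ↦ (rightLogDeriv_mul_self v h).symm)
    (hunit.mono fun _ h ↦ (rightLogDeriv_mul_self w h).symm)

theorem add_smul_eq_zero_of_zero_curvature {B : Type*} [Ring B] [Algebra ℂ B]
    {U V Uw Vv : B} {a b aw bv ρ ρv ρw : ℂ}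
    (hUV : Uw + U * V = Vv + V * U)
    (habUV : aw • U + a • Uw + (a • U) * (b • V) = bv • V + b • Vv + (b • V) * (a • U))
    (hab : a + b = 2 * a * b) (hne : a * (1 - b) ≠ 0)
    (haw : ρ * aw = a * (1 - b) * ρw) (hbv : ρ * bv = b * (1 - a) * ρv) :
    ρw • U + ρ • Uw + (ρv • V + ρ • Vv) = 0 := by
  have hcomm : U * V - V * U = Vv - Uw := by linear_combination (norm := module) hUV
  refine (smul_eq_zero_iff_right hne).1 ?_
  simp only [smul_mul_smul_comm, mul_comm b a] at habUV
  linear_combination (norm := module) ρ • habUV - (ρ * a * b) • hcomm - haw • U + hbv • V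
    + (ρ * hab) • Vv + (ρv * hab) • V

-- The flatness of `U, V` eliminates the commutator `[U, V]` from that of `a • U, b • V`.
theorem complexDeriv_smul_rightLogDeriv_add_eq_zero [CompleteSpace A] (v w : E × E)
    {G Ψ : E → A} {a b ρ : E → ℂ}
    (hG : ∀ᶠ q in 𝓝 p, DifferentiableAt ℝ G q) (hG' : DifferentiableAt ℝ (fderiv ℝ G) p)
    (hGp : IsUnit (G p))
    (hΨ : ∀ᶠ q in 𝓝 p, DifferentiableAt ℝ Ψ q) (hΨ' : DifferentiableAt ℝ (fderiv ℝ Ψ) p)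
    (hΨp : IsUnit (Ψ p))
    (ha : DifferentiableAt ℝ a p) (hb : DifferentiableAt ℝ b p) (hρ : DifferentiableAt ℝ ρ p)
    (hv : ∀ᶠ q in 𝓝 p, complexDeriv v Ψ q = (a q • rightLogDeriv v G q) * Ψ q)
    (hw : ∀ᶠ q in 𝓝 p, complexDeriv w Ψ q = (b q • rightLogDeriv w G q) * Ψ q)
    (hab : a p + b p = 2 * a p * b p) (hne : a p * (1 - b p) ≠ 0)
    (haw : ρ p * complexDeriv w a p = a p * (1 - b p) * complexDeriv w ρ p)
    (hbv : ρ p * complexDeriv v b p = b p * (1 - a p) * complexDeriv v ρ p) :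
    complexDeriv w (fun q ↦ ρ q • rightLogDeriv v G q) p
      + complexDeriv v (fun q ↦ ρ q • rightLogDeriv w G q) p = 0 := by
  have hU := differentiableAt_rightLogDeriv v hG.self_of_nhds hG' hGp
  have hV := differentiableAt_rightLogDeriv w hG.self_of_nhds hG' hGp
  have hflat := zero_curvature_of_linear_system v w hΨ hΨ' hΨp
    (ha.fun_smul hU) (hb.fun_smul hV) hv hw
  rw [complexDeriv_smul w ha hU, complexDeriv_smul v hb hV] at hflat
  rw [complexDeriv_smul w hρ hU, complexDeriv_smul v hρ hV]
  exact add_smul_eq_zero_of_zero_curvature (zero_curvature_rightLogDeriv v w hG hG' hGp) hflat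
    hab hne haw hbv

end ComplexDeriv

section Wirtinger

variable {F : Type*} [NormedAddCommGroup F] [NormedSpace ℂ F] {p : ℝ × ℝ}

/-- The complexified tangent vector whose `complexDeriv` is `∂_ξ = ½(∂_z − i ∂_ρ)`. -/
def xiDir : (ℝ × ℝ) × (ℝ × ℝ) := ((2⁻¹, 0), (0, -2⁻¹))

/-- The complexified tangent vector whose `complexDeriv` is `∂_ξ̄ = ½(∂_z + i ∂_ρ)`. -/
def xiBarDir : (ℝ × ℝ) × (ℝ × ℝ) := ((2⁻¹, 0), (0, 2⁻¹))

theorem complexDeriv_xiDir (f : ℝ × ℝ → F) (p : ℝ × ℝ) :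
    complexDeriv xiDir f p = (2 : ℂ)⁻¹ • (fderiv ℝ f p (1, 0) - I • fderiv ℝ f p (0, 1)) := by
  have hz : ((2⁻¹, 0) : ℝ × ℝ) = (2⁻¹ : ℝ) • (1, 0) := by simp
  have hρ : ((0, -2⁻¹) : ℝ × ℝ) = (-2⁻¹ : ℝ) • (0, 1) := by simp
  simp only [complexDeriv, xiDir, hz, hρ, map_smul, ← Complex.coe_smul]
  push_cast
  module

theorem complexDeriv_xiBarDir (f : ℝ × ℝ → F) (p : ℝ × ℝ) :
    complexDeriv xiBarDir f p
      = (2 : ℂ)⁻¹ • (fderiv ℝ f p (1, 0) + I • fderiv ℝ f p (0, 1)) := by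
  have hz : ((2⁻¹, 0) : ℝ × ℝ) = (2⁻¹ : ℝ) • (1, 0) := by simp
  have hρ : ((0, 2⁻¹) : ℝ × ℝ) = (2⁻¹ : ℝ) • (0, 1) := by simp
  simp only [complexDeriv, xiBarDir, hz, hρ, map_smul, ← Complex.coe_smul]
  push_cast
  module

theorem fderiv_eq_smulRight_complexDeriv (f : ℝ × ℝ → F) (p : ℝ × ℝ) :
    fderiv ℝ f p
      = (ContinuousLinearMap.fst ℝ ℝ ℝ).smulRight
          (complexDeriv xiDir f p + complexDeriv xiBarDir f p)
        + (ContinuousLinearMap.snd ℝ ℝ ℝ).smulRight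
          (I • (complexDeriv xiDir f p - complexDeriv xiBarDir f p)) := by
  have hI : I * I = -1 := I_mul_I
  rw [complexDeriv_xiDir, complexDeriv_xiBarDir]
  ext
  · simp only [ContinuousLinearMap.comp_apply, ContinuousLinearMap.inl_apply, _root_.add_apply,
      ContinuousLinearMap.smulRight_apply, ContinuousLinearMap.coe_fst',
      ContinuousLinearMap.coe_snd']
    module
  · simp only [ContinuousLinearMap.comp_apply, ContinuousLinearMap.inr_apply, _root_.add_apply,
      ContinuousLinearMap.smulRight_apply, ContinuousLinearMap.coe_fst',
      ContinuousLinearMap.coe_snd']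
    linear_combination (norm := module) hI • fderiv ℝ f p (0, 1)

theorem differentiableAt_fderiv_of_complexDeriv {f : ℝ × ℝ → F}
    (hξ : DifferentiableAt ℝ (complexDeriv xiDir f) p)
    (hξbar : DifferentiableAt ℝ (complexDeriv xiBarDir f) p) :
    DifferentiableAt ℝ (fderiv ℝ f) p := by
  rw [funext (fderiv_eq_smulRight_complexDeriv f)]
  exact ((ContinuousLinearMap.smulRightL ℝ (ℝ × ℝ) F
      (ContinuousLinearMap.fst ℝ ℝ ℝ)).differentiableAt.comp p (hξ.add hξbar)).add
    ((ContinuousLinearMap.smulRightL ℝ (ℝ × ℝ) F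
      (ContinuousLinearMap.snd ℝ ℝ ℝ)).differentiableAt.comp p ((hξ.sub hξbar).const_smul I))

theorem fderiv_add_fderiv_eq_two_smul_complexDeriv {P R : ℝ × ℝ → F}
    (hP : DifferentiableAt ℝ P p) (hR : DifferentiableAt ℝ R p) :
    fderiv ℝ R p (0, 1) + fderiv ℝ P p (1, 0)
      = (2 : ℂ) • (complexDeriv xiBarDir (fun q ↦ (2 : ℂ)⁻¹ • (P q - I • R q)) p
        + complexDeriv xiDir (fun q ↦ (2 : ℂ)⁻¹ • (P q + I • R q)) p) := by
  have hI : I * I = -1 := I_mul_I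
  have hsub : HasFDerivAt (fun q ↦ (2 : ℂ)⁻¹ • (P q - I • R q)) _ p :=
    (hP.hasFDerivAt.sub (hR.hasFDerivAt.const_smul I)).const_smul (2 : ℂ)⁻¹
  have hadd : HasFDerivAt (fun q ↦ (2 : ℂ)⁻¹ • (P q + I • R q)) _ p :=
    (hP.hasFDerivAt.add (hR.hasFDerivAt.const_smul I)).const_smul (2 : ℂ)⁻¹
  rw [complexDeriv_xiDir, complexDeriv_xiBarDir, hsub.fderiv, hadd.fderiv]
  simp only [_root_.add_apply, _root_.sub_apply, _root_.smul_apply]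
  linear_combination (norm := module) hI • fderiv ℝ R p (0, 1)

end Wirtinger

section SpectralParameter

variable {p : ℝ × ℝ} {l : ℂ}

theorem complexDeriv_ofReal_fst (v : (ℝ × ℝ) × (ℝ × ℝ)) (p : ℝ × ℝ) :
    complexDeriv v (fun q : ℝ × ℝ ↦ (q.1 : ℂ)) p = v.1.1 + I * v.2.1 := by
  have h : HasFDerivAt (fun q : ℝ × ℝ ↦ (q.1 : ℂ))
      (ofRealCLM.comp (ContinuousLinearMap.fst ℝ ℝ ℝ)) p :=
    (ofRealCLM.comp (ContinuousLinearMap.fst ℝ ℝ ℝ)).hasFDerivAt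
  simp [complexDeriv, h.fderiv]

theorem complexDeriv_ofReal_snd (v : (ℝ × ℝ) × (ℝ × ℝ)) (p : ℝ × ℝ) :
    complexDeriv v (fun q : ℝ × ℝ ↦ (q.2 : ℂ)) p = v.1.2 + I * v.2.2 := by
  have h : HasFDerivAt (fun q : ℝ × ℝ ↦ (q.2 : ℂ))
      (ofRealCLM.comp (ContinuousLinearMap.snd ℝ ℝ ℝ)) p :=
    (ofRealCLM.comp (ContinuousLinearMap.snd ℝ ℝ ℝ)).hasFDerivAt
  simp [complexDeriv, h.fderiv]

theorem star_xi (p : ℝ × ℝ) : star (xi p) = p.1 - I * p.2 := by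
  simp [xi, sub_eq_add_neg]

theorem xi_sub_star_xi (p : ℝ × ℝ) : xi p - star (xi p) = 2 * (I * p.2) := by
  rw [star_xi, xi]
  ring

theorem xi_add_star_xi (p : ℝ × ℝ) : xi p + star (xi p) = 2 * p.1 := by
  rw [star_xi, xi]
  ring

theorem spectralParameter_eq (l s : ℂ) (p : ℝ × ℝ) :
    2 / (xi p - star (xi p)) * (l - (xi p + star (xi p)) / 2 + s)
      = (l - p.1 + s) / (I * p.2) := by
  rw [xi_sub_star_xi, xi_add_star_xi]
  field_simp

theorem differentiableAt_of_eq_spectralParameter {s γ : ℝ × ℝ → ℂ} (hs : DifferentiableAt ℝ s p)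
    (hp : p.2 ≠ 0)
    (hγ : ∀ᶠ q in 𝓝 p,
      γ q = 2 / (xi q - star (xi q)) * (l - (xi q + star (xi q)) / 2 + s q)) :
    DifferentiableAt ℝ γ p := by
  have hne : I * (p.2 : ℂ) ≠ 0 := mul_ne_zero I_ne_zero (ofReal_ne_zero.2 hp)
  have hquot : DifferentiableAt ℝ (fun q : ℝ × ℝ ↦ (l - q.1 + s q) / (I * q.2)) p := by
    simp only [div_eq_mul_inv]
    fun_prop (disch := exact hne)
  exact hquot.congr_of_eventuallyEq (hγ.mono fun q hq ↦ hq.trans (spectralParameter_eq l (s q) q))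

theorem spectral_curve {s γ : ℂ} (hp : p.2 ≠ 0)
    (hs : s ^ 2 = (l - xi p) * (l - star (xi p)))
    (hγ : γ = 2 / (xi p - star (xi p)) * (l - (xi p + star (xi p)) / 2 + s)) :
    (p.2 : ℂ) * (1 + γ ^ 2) = 2 * I * (p.1 - l) * γ := by
  have hρ : (p.2 : ℂ) ≠ 0 := ofReal_ne_zero.2 hp
  have hI : I ^ 2 = -1 := I_sq
  have hmul : I * p.2 * γ = l - p.1 + s := by
    rw [hγ, spectralParameter_eq, mul_div_cancel₀ _ (mul_ne_zero I_ne_zero hρ)]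
  have hs' : s ^ 2 = (l - p.1) ^ 2 + p.2 ^ 2 := by
    rw [hs, star_xi, xi]
    linear_combination (-p.2 ^ 2 : ℂ) * hI
  refine mul_left_cancel₀ hρ ?_
  linear_combination
    -hs' - (I * p.2 * γ - (l - p.1) + s) * hmul + p.2 ^ 2 * γ ^ 2 * hI

theorem spectral_curve_complexDeriv (v : (ℝ × ℝ) × (ℝ × ℝ)) {γ : ℝ × ℝ → ℂ}
    (hγ : DifferentiableAt ℝ γ p)
    (hcurve : ∀ᶠ q in 𝓝 p, (q.2 : ℂ) * (1 + γ q ^ 2) = 2 * I * (q.1 - l) * γ q) :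
    p.2 * (γ p ^ 2 - 1) * complexDeriv v γ p
      = 2 * I * γ p ^ 2 * complexDeriv v (fun q ↦ (q.1 : ℂ)) p
        - γ p * (1 + γ p ^ 2) * complexDeriv v (fun q ↦ (q.2 : ℂ)) p := by
  have hsq : HasDerivAt (fun x : ℂ ↦ 1 + x ^ 2) (2 * γ p) (γ p) := by
    simpa using (hasDerivAt_pow 2 (γ p)).const_add 1
  have haff : HasDerivAt (fun x : ℂ ↦ 2 * I * (x - l)) (2 * I) (p.1 : ℂ) := by
    simpa using ((hasDerivAt_id (p.1 : ℂ)).sub_const l).const_mul (2 * I)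
  have hz : DifferentiableAt ℝ (fun q : ℝ × ℝ ↦ (q.1 : ℂ)) p := by fun_prop
  have hρ : DifferentiableAt ℝ (fun q : ℝ × ℝ ↦ (q.2 : ℂ)) p := by fun_prop
  have hderiv := complexDeriv_congr v hcurve
  rw [complexDeriv_mul v hρ (by fun_prop), complexDeriv_mul v (by fun_prop) hγ,
    complexDeriv_comp_of_hasDerivAt v hsq hγ, complexDeriv_comp_of_hasDerivAt v haff hz] at hderiv
  simp only [smul_eq_mul] at hderiv
  linear_combination γ p * hderiv - complexDeriv v γ p * hcurve.self_of_nhds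

theorem spectral_curve_complexDeriv_xiDir {γ : ℝ × ℝ → ℂ} (hγ : DifferentiableAt ℝ γ p)
    (hcurve : ∀ᶠ q in 𝓝 p, (q.2 : ℂ) * (1 + γ q ^ 2) = 2 * I * (q.1 - l) * γ q)
    (hne : 1 + γ p ≠ 0) :
    p.2 * (1 - γ p) * complexDeriv xiDir γ p
      = γ p * (1 + γ p) * complexDeriv xiDir (fun q ↦ (q.2 : ℂ)) p := by
  refine mul_left_cancel₀ hne ?_
  have h := spectral_curve_complexDeriv xiDir hγ hcurve
  simp only [complexDeriv_ofReal_fst, complexDeriv_ofReal_snd, xiDir] at h ⊢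
  push_cast at h ⊢
  linear_combination -h

theorem spectral_curve_complexDeriv_xiBarDir {γ : ℝ × ℝ → ℂ} (hγ : DifferentiableAt ℝ γ p)
    (hcurve : ∀ᶠ q in 𝓝 p, (q.2 : ℂ) * (1 + γ q ^ 2) = 2 * I * (q.1 - l) * γ q)
    (hne : 1 - γ p ≠ 0) :
    p.2 * (1 + γ p) * complexDeriv xiBarDir γ p
      = γ p * (1 - γ p) * complexDeriv xiBarDir (fun q ↦ (q.2 : ℂ)) p := by
  refine mul_left_cancel₀ hne ?_
  have h := spectral_curve_complexDeriv xiBarDir hγ hcurve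
  simp only [complexDeriv_ofReal_fst, complexDeriv_ofReal_snd, xiBarDir] at h ⊢
  push_cast at h ⊢
  linear_combination -h

theorem complexDeriv_xiBarDir_inv_one_sub_of_spectral_curve {γ : ℝ × ℝ → ℂ}
    (hγ : DifferentiableAt ℝ γ p)
    (hcurve : ∀ᶠ q in 𝓝 p, (q.2 : ℂ) * (1 + γ q ^ 2) = 2 * I * (q.1 - l) * γ q)
    (hsub : 1 - γ p ≠ 0) (hadd : 1 + γ p ≠ 0) :
    p.2 * complexDeriv xiBarDir (fun q ↦ (1 - γ q)⁻¹) p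
      = (1 - γ p)⁻¹ * (1 - (1 + γ p)⁻¹) * complexDeriv xiBarDir (fun q ↦ (q.2 : ℂ)) p := by
  rw [complexDeriv_inv_one_sub xiBarDir hγ hsub]
  field_simp
  linear_combination spectral_curve_complexDeriv_xiBarDir hγ hcurve hsub

theorem complexDeriv_xiDir_inv_one_add_of_spectral_curve {γ : ℝ × ℝ → ℂ}
    (hγ : DifferentiableAt ℝ γ p)
    (hcurve : ∀ᶠ q in 𝓝 p, (q.2 : ℂ) * (1 + γ q ^ 2) = 2 * I * (q.1 - l) * γ q)
    (hsub : 1 - γ p ≠ 0) (hadd : 1 + γ p ≠ 0) :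
    p.2 * complexDeriv xiDir (fun q ↦ (1 + γ q)⁻¹) p
      = (1 + γ p)⁻¹ * (1 - (1 - γ p)⁻¹) * complexDeriv xiDir (fun q ↦ (q.2 : ℂ)) p := by
  rw [complexDeriv_inv_one_add xiDir hγ hadd]
  field_simp
  linear_combination -spectral_curve_complexDeriv_xiDir hγ hcurve hadd

end SpectralParameter

section ErnstEquation

variable {A : Type*} [NormedRing A] [NormedAlgebra ℂ A] [CompleteSpace A]
variable {p : ℝ × ℝ} {G Ψ : ℝ × ℝ → A}

theorem complexDeriv_rightLogDeriv_add_eq_zero_of_spectral_curve {γ : ℝ × ℝ → ℂ} {l : ℂ}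
    (hG : ∀ᶠ q in 𝓝 p, DifferentiableAt ℝ G q) (hG' : DifferentiableAt ℝ (fderiv ℝ G) p)
    (hGp : IsUnit (G p)) (hΨ : ∀ᶠ q in 𝓝 p, DifferentiableAt ℝ Ψ q) (hΨp : IsUnit (Ψ p))
    (hγ : DifferentiableAt ℝ γ p) (hp : p.2 ≠ 0)
    (hcurve : ∀ᶠ q in 𝓝 p, (q.2 : ℂ) * (1 + γ q ^ 2) = 2 * I * (q.1 - l) * γ q)
    (hsub : 1 - γ p ≠ 0) (hadd : 1 + γ p ≠ 0)
    (hξ : ∀ᶠ q in 𝓝 p, complexDeriv xiDir Ψ q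
      = ((1 - γ q)⁻¹ • rightLogDeriv xiDir G q) * Ψ q)
    (hξbar : ∀ᶠ q in 𝓝 p, complexDeriv xiBarDir Ψ q
      = ((1 + γ q)⁻¹ • rightLogDeriv xiBarDir G q) * Ψ q) :
    complexDeriv xiBarDir (fun q ↦ (q.2 : ℂ) • rightLogDeriv xiDir G q) p
      + complexDeriv xiDir (fun q ↦ (q.2 : ℂ) • rightLogDeriv xiBarDir G q) p = 0 := by
  have ha : DifferentiableAt ℝ (fun q ↦ (1 - γ q)⁻¹) p := by fun_prop (disch := assumption)
  have hb : DifferentiableAt ℝ (fun q ↦ (1 + γ q)⁻¹) p := by fun_prop (disch := assumption)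
  have hU := differentiableAt_rightLogDeriv xiDir hG.self_of_nhds hG' hGp
  have hV := differentiableAt_rightLogDeriv xiBarDir hG.self_of_nhds hG' hGp
  have hΨ' : DifferentiableAt ℝ (fderiv ℝ Ψ) p :=
    differentiableAt_fderiv_of_complexDeriv
      (((ha.fun_smul hU).fun_mul hΨ.self_of_nhds).congr_of_eventuallyEq hξ)
      (((hb.fun_smul hV).fun_mul hΨ.self_of_nhds).congr_of_eventuallyEq hξbar)
  have hγ0 : γ p ≠ 0 := fun h ↦ hp (by simpa [h] using hcurve.self_of_nhds)
  refine complexDeriv_smul_rightLogDeriv_add_eq_zero xiDir xiBarDir hG hG' hGp hΨ hΨ' hΨp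
    ha hb (by fun_prop) hξ hξbar ?_ ?_
    (complexDeriv_xiBarDir_inv_one_sub_of_spectral_curve hγ hcurve hsub hadd)
    (complexDeriv_xiDir_inv_one_add_of_spectral_curve hγ hcurve hsub hadd)
  · field_simp
    ring
  · field_simp
    simp [hγ0, hsub, hadd]

theorem differentiableAt_smul_fderiv_mul_inverse (x : ℝ × ℝ)
    (hG : DifferentiableAt ℝ G p) (hG' : DifferentiableAt ℝ (fderiv ℝ G) p)
    (hGp : IsUnit (G p)) :
    DifferentiableAt ℝ (fun q ↦ (q.2 : ℂ) • (fderiv ℝ G q x * Ring.inverse (G q))) p := by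
  have hinv := hG.inverse hGp
  have hρ : DifferentiableAt ℝ (fun q : ℝ × ℝ ↦ (q.2 : ℂ)) p := by fun_prop
  exact hρ.fun_smul ((hG'.clm_apply (differentiableAt_const x)).fun_mul hinv)

theorem fderiv_add_fderiv_eq_complexDeriv_rightLogDeriv
    (hG : DifferentiableAt ℝ G p) (hG' : DifferentiableAt ℝ (fderiv ℝ G) p)
    (hGp : IsUnit (G p)) :
    fderiv ℝ (fun q ↦ (q.2 : ℂ) • (fderiv ℝ G q (0, 1) * Ring.inverse (G q))) p (0, 1)
        + fderiv ℝ (fun q ↦ (q.2 : ℂ) • (fderiv ℝ G q (1, 0) * Ring.inverse (G q))) p (1, 0)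
      = (2 : ℂ) • (complexDeriv xiBarDir (fun q ↦ (q.2 : ℂ) • rightLogDeriv xiDir G q) p
        + complexDeriv xiDir (fun q ↦ (q.2 : ℂ) • rightLogDeriv xiBarDir G q) p) := by
  rw [fderiv_add_fderiv_eq_two_smul_complexDeriv
    (differentiableAt_smul_fderiv_mul_inverse (1, 0) hG hG' hGp)
    (differentiableAt_smul_fderiv_mul_inverse (0, 1) hG hG' hGp)]
  congr! 4 with q q
  · rw [rightLogDeriv, complexDeriv_xiDir, smul_mul_assoc, sub_mul, smul_mul_assoc]
    module
  · rw [rightLogDeriv, complexDeriv_xiBarDir, smul_mul_assoc, add_mul, smul_mul_assoc]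
    module

theorem linear_system_implies_ernst_matrix_equation_general
    {D : Set (ℝ × ℝ)} (hD : IsOpen D) (hρ : ∀ p ∈ D, p.2 ≠ 0)
    (hG : ContDiffOn ℝ 2 G D) (hGinv : ∀ p ∈ D, IsUnit (G p))
    {l : ℂ} {s γ : ℝ × ℝ → ℂ} (hs : DifferentiableOn ℝ s D)
    (hssq : ∀ p ∈ D, s p ^ 2 = (l - xi p) * (l - star (xi p)))
    (hγ : ∀ p ∈ D, γ p = 2 / (xi p - star (xi p)) * (l - (xi p + star (xi p)) / 2 + s p))
    (hγne : ∀ p ∈ D, γ p ≠ 1 ∧ γ p ≠ -1)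
    (hΨ : DifferentiableOn ℝ Ψ D) (hΨinv : ∀ p ∈ D, IsUnit (Ψ p))
    (hΨξ : ∀ p ∈ D, complexDeriv xiDir Ψ p
      = ((1 - γ p)⁻¹ • rightLogDeriv xiDir G p) * Ψ p)
    (hΨξbar : ∀ p ∈ D, complexDeriv xiBarDir Ψ p
      = ((1 + γ p)⁻¹ • rightLogDeriv xiBarDir G p) * Ψ p) :
    ∀ p ∈ D,
      fderiv ℝ (fun q ↦ (q.2 : ℂ) • (fderiv ℝ G q (0, 1) * Ring.inverse (G q))) p (0, 1)
        + fderiv ℝ (fun q ↦ (q.2 : ℂ) • (fderiv ℝ G q (1, 0) * Ring.inverse (G q))) p (1, 0)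
      = 0 := by
  intro p hp
  have hDp : D ∈ 𝓝 p := hD.mem_nhds hp
  have hGd : ∀ᶠ q in 𝓝 p, DifferentiableAt ℝ G q :=
    (hG.differentiableOn two_ne_zero).eventually_differentiableAt hDp
  have hG' := differentiableAt_fderiv_of_contDiffAt_two (hG.contDiffAt hDp)
  have hγd : DifferentiableAt ℝ γ p :=
    differentiableAt_of_eq_spectralParameter (hs.differentiableAt hDp) (hρ p hp)
      (eventually_of_mem hDp hγ)
  rw [fderiv_add_fderiv_eq_complexDeriv_rightLogDeriv hGd.self_of_nhds hG' (hGinv p hp),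
    complexDeriv_rightLogDeriv_add_eq_zero_of_spectral_curve hGd hG' (hGinv p hp)
      (hΨ.eventually_differentiableAt hDp) (hΨinv p hp) hγd (hρ p hp)
      (eventually_of_mem hDp fun q hq ↦ spectral_curve (hρ q hq) (hssq q hq) (hγ q hq))
      (sub_ne_zero.2 (hγne p hp).1.symm)
      (fun h ↦ (hγne p hp).2 (eq_neg_of_add_eq_zero_right h))
      (eventually_of_mem hDp hΨξ) (eventually_of_mem hDp hΨξbar),
    smul_zero]

end ErnstEquation

section MatrixDerivatives

variable {n : Type*} [Fintype n] [DecidableEq n] {p : ℝ × ℝ}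

attribute [local instance] Matrix.linftyOpNormedRing

/-- The `ℓ^∞` operator norm makes complex square matrices a Banach algebra. The scalar field is
fixed to be `ℂ` so that the real normed structure can only be the one restricted from `ℂ`. -/
abbrev matrixNormedAlgebra : NormedAlgebra ℂ (Matrix n n ℂ) := Matrix.linftyOpNormedAlgebra

attribute [local instance] matrixNormedAlgebra

theorem contDiffOn_matrix {E : Type*} [NormedAddCommGroup E] [NormedSpace ℝ E] {k : WithTop ℕ∞}
    {F : E → Matrix n n ℂ} {D : Set E} (hF : ∀ i j, ContDiffOn ℝ k (fun p ↦ F p i j) D) :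
    ContDiffOn ℝ k F D := by
  let ofCLM : (n → n → ℂ) →L[ℝ] Matrix n n ℂ :=
    (Matrix.ofLinearEquiv ℝ).toLinearMap.toContinuousLinearMap
  exact ofCLM.contDiff.comp_contDiffOn (f := fun p i j ↦ F p i j)
    (contDiffOn_pi.2 fun i ↦ contDiffOn_pi.2 (hF i))

theorem matPz_eq_fderiv {F : ℝ × ℝ → Matrix (Fin 2) (Fin 2) ℂ} (hF : DifferentiableAt ℝ F p) :
    matPz F p = fderiv ℝ F p (1, 0) := by
  ext i j
  have hline : HasDerivAt (fun t : ℝ ↦ (t, p.2)) ((1 : ℝ), (0 : ℝ)) p.1 :=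
    (hasDerivAt_id p.1).prodMk (hasDerivAt_const _ _)
  have hentry := (Matrix.entryLinearMap ℝ ℂ i j).toContinuousLinearMap.hasFDerivAt.comp_hasDerivAt
    p.1 (hF.hasFDerivAt.comp_hasDerivAt (f := fun t : ℝ ↦ (t, p.2)) p.1 hline)
  exact hentry.deriv

theorem matPr_eq_fderiv {F : ℝ × ℝ → Matrix (Fin 2) (Fin 2) ℂ} (hF : DifferentiableAt ℝ F p) :
    matPr F p = fderiv ℝ F p (0, 1) := by
  ext i j
  have hline : HasDerivAt (fun t : ℝ ↦ (p.1, t)) ((0 : ℝ), (1 : ℝ)) p.2 :=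
    (hasDerivAt_const _ _).prodMk (hasDerivAt_id p.2)
  have hentry := (Matrix.entryLinearMap ℝ ℂ i j).toContinuousLinearMap.hasFDerivAt.comp_hasDerivAt
    p.2 (hF.hasFDerivAt.comp_hasDerivAt (f := fun t : ℝ ↦ (p.1, t)) p.2 hline)
  exact hentry.deriv

theorem matDxi_eq_complexDeriv {F : ℝ × ℝ → Matrix (Fin 2) (Fin 2) ℂ}
    (hF : DifferentiableAt ℝ F p) : matDxi F p = complexDeriv xiDir F p := by
  rw [matDxi, matPz_eq_fderiv hF, matPr_eq_fderiv hF, complexDeriv_xiDir]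
  rfl

theorem matDxiBar_eq_complexDeriv {F : ℝ × ℝ → Matrix (Fin 2) (Fin 2) ℂ}
    (hF : DifferentiableAt ℝ F p) : matDxiBar F p = complexDeriv xiBarDir F p := by
  rw [matDxiBar, matPz_eq_fderiv hF, matPr_eq_fderiv hF, complexDeriv_xiBarDir]
  rfl

theorem matPr_add_matPz_eq_fderiv_add_fderiv {D : Set (ℝ × ℝ)} (hD : IsOpen D)
    {G : ℝ × ℝ → Matrix (Fin 2) (Fin 2) ℂ} (hG : ContDiffOn ℝ 2 G D) (hp : p ∈ D)
    (hGp : IsUnit (G p)) :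
    matPr (fun q ↦ (q.2 : ℂ) • (matPr G q * (G q)⁻¹)) p
        + matPz (fun q ↦ (q.2 : ℂ) • (matPz G q * (G q)⁻¹)) p
      = fderiv ℝ (fun q ↦ (q.2 : ℂ) • (fderiv ℝ G q (0, 1) * Ring.inverse (G q))) p (0, 1)
        + fderiv ℝ (fun q ↦ (q.2 : ℂ) • (fderiv ℝ G q (1, 0) * Ring.inverse (G q))) p (1, 0) := by
  have hDp : D ∈ 𝓝 p := hD.mem_nhds hp
  have hGd : ∀ᶠ q in 𝓝 p, DifferentiableAt ℝ G q :=
    (hG.differentiableOn two_ne_zero).eventually_differentiableAt hDp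
  have hG' := differentiableAt_fderiv_of_contDiffAt_two (hG.contDiffAt hDp)
  have hr : (fun q ↦ (q.2 : ℂ) • (matPr G q * (G q)⁻¹))
      =ᶠ[𝓝 p] fun q ↦ (q.2 : ℂ) • (fderiv ℝ G q (0, 1) * Ring.inverse (G q)) :=
    hGd.mono fun q hq ↦ by simp only [matPr_eq_fderiv hq, Matrix.nonsing_inv_eq_ringInverse]
  have hz : (fun q ↦ (q.2 : ℂ) • (matPz G q * (G q)⁻¹))
      =ᶠ[𝓝 p] fun q ↦ (q.2 : ℂ) • (fderiv ℝ G q (1, 0) * Ring.inverse (G q)) :=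
    hGd.mono fun q hq ↦ by simp only [matPz_eq_fderiv hq, Matrix.nonsing_inv_eq_ringInverse]
  have hGp' := hGd.self_of_nhds
  rw [matPr_eq_fderiv ((differentiableAt_smul_fderiv_mul_inverse
      (0, 1) hGp' hG' hGp).congr_of_eventuallyEq hr),
    matPz_eq_fderiv ((differentiableAt_smul_fderiv_mul_inverse
      (1, 0) hGp' hG' hGp).congr_of_eventuallyEq hz), hr.fderiv_eq, hz.fderiv_eq]

theorem matDxi_mul_inv_eq_rightLogDeriv {G : ℝ × ℝ → Matrix (Fin 2) (Fin 2) ℂ}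
    (hG : DifferentiableAt ℝ G p) : matDxi G p * (G p)⁻¹ = rightLogDeriv xiDir G p := by
  rw [matDxi_eq_complexDeriv hG, Matrix.nonsing_inv_eq_ringInverse, rightLogDeriv]

theorem matDxiBar_mul_inv_eq_rightLogDeriv {G : ℝ × ℝ → Matrix (Fin 2) (Fin 2) ℂ}
    (hG : DifferentiableAt ℝ G p) : matDxiBar G p * (G p)⁻¹ = rightLogDeriv xiBarDir G p := by
  rw [matDxiBar_eq_complexDeriv hG, Matrix.nonsing_inv_eq_ringInverse, rightLogDeriv]

end MatrixDerivatives

theorem linear_system_implies_ernst_matrix_equation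
    (D : Set (ℝ × ℝ)) (hD : IsOpen D) (hDhalf : ∀ p ∈ D, 0 < p.2)
    (G : ℝ × ℝ → Matrix (Fin 2) (Fin 2) ℂ)
    (hGsmooth : ∀ i j, ContDiffOn ℝ 2 (fun p => G p i j) D)
    (hGinv : ∀ p ∈ D, IsUnit (G p))
    (Λ : Set ℂ) (hΛopen : IsOpen Λ) (hΛne : Λ.Nonempty) (hΛconn : IsConnected Λ)
    (s : ℂ → ℝ × ℝ → ℂ)
    (hscont : ContinuousOn (fun q : ℂ × (ℝ × ℝ) => s q.1 q.2) (Λ ×ˢ D))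
    (hshol : ∀ p ∈ D, DifferentiableOn ℂ (fun l => s l p) Λ)
    (hsC1 : ∀ l ∈ Λ, ContDiffOn ℝ 1 (s l) D)
    (hssq : ∀ l ∈ Λ, ∀ p ∈ D,
      (s l p) ^ 2 = (l - xi p) * (l - star (xi p)))
    (γ : ℂ → ℝ × ℝ → ℂ)
    (hγ : ∀ l p, γ l p =
      (2 / (xi p - star (xi p))) * (l - (xi p + star (xi p)) / 2 + s l p))
    (hγne : ∀ l ∈ Λ, ∀ p ∈ D, γ l p ≠ 1 ∧ γ l p ≠ -1)
    (hγnonconst : ∀ p ∈ D, ∃ l₁ ∈ Λ, ∃ l₂ ∈ Λ, γ l₁ p ≠ γ l₂ p)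
    (hΨ : ∀ l ∈ Λ, ∃ Ψ : ℝ × ℝ → Matrix (Fin 2) (Fin 2) ℂ,
      (∀ i j, ContDiffOn ℝ 1 (fun p => Ψ p i j) D) ∧
      (∀ p ∈ D, IsUnit (Ψ p)) ∧
      (∀ p ∈ D, matDxi Ψ p =
        ((1 - γ l p)⁻¹ • (matDxi G p * (G p)⁻¹)) * Ψ p) ∧
      (∀ p ∈ D, matDxiBar Ψ p =
        ((1 + γ l p)⁻¹ • (matDxiBar G p * (G p)⁻¹)) * Ψ p)) :
    ∀ p ∈ D,
      matPr (fun q => (q.2 : ℂ) • (matPr G q * (G q)⁻¹)) p +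
        matPz (fun q => (q.2 : ℂ) • (matPz G q * (G q)⁻¹)) p = 0 := by
  let : NormedRing (Matrix (Fin 2) (Fin 2) ℂ) := Matrix.linftyOpNormedRing
  let : NormedAlgebra ℂ (Matrix (Fin 2) (Fin 2) ℂ) := matrixNormedAlgebra
  obtain ⟨l, hl⟩ := hΛne
  obtain ⟨Ψ, hΨsmooth, hΨinv, hΨξ, hΨξbar⟩ := hΨ l hl
  have hG : ContDiffOn ℝ 2 G D := contDiffOn_matrix hGsmooth
  have hGd : ∀ p ∈ D, DifferentiableAt ℝ G p := fun p hp ↦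
    (hG.differentiableOn two_ne_zero).differentiableAt (hD.mem_nhds hp)
  have hΨD : DifferentiableOn ℝ Ψ D := (contDiffOn_matrix hΨsmooth).differentiableOn one_ne_zero
  have hΨd : ∀ p ∈ D, DifferentiableAt ℝ Ψ p := fun p hp ↦
    hΨD.differentiableAt (hD.mem_nhds hp)
  intro p hp
  refine (matPr_add_matPz_eq_fderiv_add_fderiv hD hG hp (hGinv p hp)).trans ?_
  refine linear_system_implies_ernst_matrix_equation_general hD (fun q hq ↦ (hDhalf q hq).ne')
    hG hGinv ((hsC1 l hl).differentiableOn one_ne_zero) (hssq l hl) (fun q _ ↦ hγ l q)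
    (hγne l hl) hΨD hΨinv (fun q hq ↦ ?_) (fun q hq ↦ ?_) p hp
  · rw [← matDxi_eq_complexDeriv (hΨd q hq), ← matDxi_mul_inv_eq_rightLogDeriv (hGd q hq)]
    exact hΨξ q hq
  · rw [← matDxiBar_eq_complexDeriv (hΨd q hq), ← matDxiBar_mul_inv_eq_rightLogDeriv (hGd q hq)]
    exact hΨξbar q hq
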